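/- Vector-valued Hardy–Littlewood maximal inequality in weak Lebesgue spaces: for every 1 < p < ∞ there is a constant C_p > 0 such that for every sequence (f_k) of measurable functions on ℝⁿ with (Σ_k |f_k|²)^{1/2} ∈ L^{(p,∞)}(ℝⁿ), one has ‖(Σ_k (M f_k)²)^{1/2}‖_{L^{(p,∞)}} ≤ C_p ‖(Σ_k |f_k|²)^{1/2}‖_{L^{(p,∞)}}. -/

import Mathlib

/-!
The proof interpolates between two vector-valued weak type estimates for the maximal function `M`,
written `HL` on nonnegative functions.

The scalar input is the Fefferman–Stein inequality `∫ (M g)^q w ≤ K ∫ g^q M w` for `q > 1`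
(`HL_strong_type`), obtained from a Vitali covering argument (`HL_weak_type`) and the layer-cake
formula; `w = 1` gives the maximal theorem in `L^q`. Write `F = (∑ a_k²)^{1/2}`.

* For `1 < q < 2` (`vector_weak_type_lt_two`): Rubio de Francia's algorithm gives `u ≥ F` with
  `M u ≤ B u` and `‖u‖_q ≲ ‖F‖_q`. With `v_k = a_k^{2/q} u^{1-2/q}`, Hölder's inequality on balls
  yields `∑ (M a_k)² ≲ u^{2-q} ∑ (M v_k)^q`, and `∫ ∑ (M v_k)^q ≲ ∫ F² u^{q-2} ≤ ∫ F^q`; Chebyshev's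
  inequality for the two factors finishes the estimate.
* For exponents `2s > 2` (`vector_weak_type_gt_two`): duality. If `E` is a bounded piece of
  `{∑ (M a_k)² > l²}`, then `l² |E| ≤ K ∫ F² M 1_E ≲ ‖F‖_{2s}² |E|^{1-1/s}`.

For `F` in weak `L^p`, the part of the sequence on `{F > t}` is handled by the first estimate with
an exponent `q < p`, and the part on `{F ≤ t}` by the second with exponent `2p > p`
(`vector_distribution_le`).
-/

open MeasureTheory ENNReal Set Filter
open scoped NNReal RealInnerProductSpace Topology

noncomputable section

abbrev Rn (n : ℕ) := EuclideanSpace ℝ (Fin n)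

/-- Weak `L^p` quasinorm of an `ℝ≥0∞`-valued function on `ℝⁿ`. -/
noncomputable def wquasi {n : ℕ} (g : Rn n → ℝ≥0∞) (p : ℝ) : ℝ≥0∞ :=
  ⨆ t : ℝ≥0, (t : ℝ≥0∞) * (volume {x | (t : ℝ≥0∞) < g x}) ^ (1 / p)

/-- Weak `L^p` (Lorentz `L^{(p,∞)}`) quasinorm `‖f‖_{L^{(p,∞)}}` of a function on `ℝⁿ`. -/
noncomputable def wLp {n : ℕ} {α : Type*} [NormedAddCommGroup α] (f : Rn n → α) (p : ℝ) : ℝ≥0∞ :=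
  wquasi (fun x => (‖f x‖₊ : ℝ≥0∞)) p

/-- Fourier transform (with the paper's normalization). -/
noncomputable def ft {n : ℕ} (f : Rn n → ℂ) (ξ : Rn n) : ℂ :=
  ∫ x, Complex.exp (-Complex.I * ((⟪x, ξ⟫ : ℝ) : ℂ)) * f x

/-- The (uncentered-in-radius, centered) Hardy–Littlewood maximal function
`M f(x) = sup_{r>0} (1/|B_r|) ∫_{B_r} |f(x−y)| dy`, valued in `ℝ≥0∞`. -/
noncomputable def maximal {n : ℕ} (f : Rn n → ℂ) (x : Rn n) : ℝ≥0∞ :=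
  ⨆ (r : ℝ) (_ : 0 < r), (volume (Metric.ball (0 : Rn n) r))⁻¹ *
    ∫⁻ y in Metric.ball (0 : Rn n) r, (‖f (x - y)‖₊ : ℝ≥0∞)

/-! ### The maximal function and its weighted weak type `(1,1)` estimate -/

/-- The centred Hardy–Littlewood maximal function of a nonnegative extended-real function. -/
def HL {n : ℕ} (g : Rn n → ℝ≥0∞) (x : Rn n) : ℝ≥0∞ :=
  ⨆ (r : ℝ) (_ : 0 < r), (volume (Metric.ball x r))⁻¹ * ∫⁻ y in Metric.ball x r, g y

lemma maximal_eq_HL {n : ℕ} (f : Rn n → ℂ) (x : Rn n) :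
    maximal f x = HL (fun y => (‖f y‖₊ : ℝ≥0∞)) x := by
  unfold maximal HL
  refine iSup_congr fun r => iSup_congr fun hr => ?_
  have hv : volume (Metric.ball (0 : Rn n) r) = volume (Metric.ball x r) :=
    (Measure.addHaar_ball_center volume x r).symm
  rw [hv]
  congr 1
  have h := (Measure.measurePreserving_sub_left (volume : Measure (Rn n)) x).setLIntegral_comp_preimage_emb
    (MeasurableEquiv.subLeft x).measurableEmbedding (fun y => (‖f y‖₊ : ℝ≥0∞)) (Metric.ball x r)
  rw [← h]
  congr 2
  ext y
  simp [dist_eq_norm]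

lemma lintegral_ball_le_HL {n : ℕ} (g : Rn n → ℝ≥0∞) (x : Rn n) {r : ℝ} (hr : 0 < r) :
    ∫⁻ y in Metric.ball x r, g y ≤ volume (Metric.ball x r) * HL g x := by
  have h : (volume (Metric.ball x r))⁻¹ * ∫⁻ y in Metric.ball x r, g y ≤ HL g x :=
    le_iSup₂ (f := fun (r : ℝ) (_ : 0 < r) =>
      (volume (Metric.ball x r))⁻¹ * ∫⁻ y in Metric.ball x r, g y) r hr
  calc ∫⁻ y in Metric.ball x r, g y
      = volume (Metric.ball x r) *
        ((volume (Metric.ball x r))⁻¹ * ∫⁻ y in Metric.ball x r, g y) := by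
        rw [← mul_assoc, ENNReal.mul_inv_cancel (Metric.measure_ball_pos volume x hr).ne'
          measure_ball_lt_top.ne, one_mul]
    _ ≤ _ := by gcongr

/-- Shrinking the radius slightly keeps the integral of `g` over a ball above a given level, and
the smaller ball stays inside the balls with nearby centres; so each average is lower
semicontinuous in the centre. -/
lemma measurable_HL {n : ℕ} (g : Rn n → ℝ≥0∞) : Measurable (HL g) := by
  apply LowerSemicontinuous.measurable
  unfold HL
  refine lowerSemicontinuous_iSup fun r => lowerSemicontinuous_iSup fun hr => ?_
  have hvol : ∀ x : Rn n, volume (Metric.ball x r) = volume (Metric.ball (0 : Rn n) r) :=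
    fun x => Measure.addHaar_ball_center volume x r
  simp_rw [hvol]
  set V := volume (Metric.ball (0 : Rn n) r) with hV
  have hV0 : V ≠ 0 := (Metric.measure_ball_pos volume _ hr).ne'
  have hVt : V ≠ ⊤ := measure_ball_lt_top.ne
  intro x a ha
  have ha' : a * V < ∫⁻ y in Metric.ball x r, g y := by
    change a < V⁻¹ * _ at ha
    rw [mul_comm, ← div_eq_mul_inv] at ha
    exact ENNReal.mul_lt_of_lt_div ha
  have hU : Metric.ball x r = ⋃ k : ℕ, Metric.ball x (r - 1 / (k + 1)) := by
    ext y
    simp only [mem_iUnion, Metric.mem_ball]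
    constructor
    · intro h
      obtain ⟨k, hk⟩ := exists_nat_one_div_lt (sub_pos.2 h)
      exact ⟨k, by linarith⟩
    · rintro ⟨k, hk⟩
      have : (0 : ℝ) < 1 / (k + 1) := by positivity
      linarith
  have hmono : Monotone fun k : ℕ => Metric.ball x (r - 1 / ((k : ℝ) + 1)) := by
    intro i j hij
    apply Metric.ball_subset_ball
    have : 1 / ((j : ℝ) + 1) ≤ 1 / ((i : ℝ) + 1) := by gcongr
    linarith
  rw [hU, setLIntegral_iUnion_of_directed g hmono.directed_le] at ha'
  obtain ⟨k, hk⟩ := lt_iSup_iff.1 ha'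
  have hpos : (0 : ℝ) < 1 / (k + 1) := by positivity
  filter_upwards [Metric.ball_mem_nhds x hpos] with z hz
  change a < V⁻¹ * _
  rw [mul_comm, ← div_eq_mul_inv, ENNReal.lt_div_iff_mul_lt (Or.inl hV0) (Or.inl hVt)]
  refine hk.trans_le (lintegral_mono_set ?_)
  apply Metric.ball_subset_ball'
  rw [Metric.mem_ball, dist_comm] at hz
  linarith

/-- Weighted weak type `(1,1)`: a Vitali subfamily `B(b, r b)` of balls on which the average of `g`
exceeds `l` is disjoint while the balls `B(b, 5 r b)` cover; each `B(b, 5 r b)` lies in `B(y, 7 r b)`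
for `y ∈ B(b, r b)`, so its `w`-mass is controlled by `HL w y`. The radii are first truncated
at `N`, which makes the Vitali lemma applicable without integrability of `g`. -/
lemma HL_weak_type {n : ℕ} (g w : Rn n → ℝ≥0∞) (hg : Measurable g) (l : ℝ≥0∞) :
    l * ∫⁻ x in {x | l < HL g x}, w x ≤ 7 ^ n * ∫⁻ x, g x * HL w x := by
  let E : ℕ → Set (Rn n) := fun N => {x | ∃ r : ℝ, 0 < r ∧ r ≤ N ∧
    l * volume (Metric.ball x r) < ∫⁻ y in Metric.ball x r, g y}
  have hEmono : Monotone E := by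
    rintro i j hij x ⟨r, h0, h1, h2⟩
    exact ⟨r, h0, h1.trans (by exact_mod_cast hij), h2⟩
  have hsub : {x | l < HL g x} ⊆ ⋃ N, E N := by
    intro x hx
    simp only [mem_ofPred_eq, HL, lt_iSup_iff] at hx
    obtain ⟨r, hr, h⟩ := hx
    obtain ⟨N, hN⟩ := exists_nat_ge r
    refine mem_iUnion.2 ⟨N, r, hr, hN, ?_⟩
    rw [mul_comm, ← div_eq_mul_inv] at h
    exact ENNReal.mul_lt_of_lt_div h
  have key : ∀ N, l * ∫⁻ x in E N, w x ≤ 7 ^ n * ∫⁻ x, g x * HL w x := by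
    intro N
    choose! r hr0 hrN hr using (fun x (hx : x ∈ E N) => hx)
    obtain ⟨u, huE, hdisj, hcov⟩ :=
      Vitali.exists_disjoint_subfamily_covering_enlargement_closedBall (E N) id r N hrN 5 (by norm_num)
    have hdisj' : u.PairwiseDisjoint fun b => Metric.ball b (r b) :=
      hdisj.mono fun b => Metric.ball_subset_closedBall
    have hcount : u.Countable := hdisj'.countable_of_isOpen (fun _ _ => Metric.isOpen_ball)
      fun b hb => ⟨b, Metric.mem_ball_self (hr0 b (huE hb))⟩
    have hball : ∀ b ∈ u, l * ∫⁻ x in Metric.closedBall b (5 * r b), w x ≤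
        7 ^ n * ∫⁻ x in Metric.ball b (r b), g x * HL w x := by
      intro b hb
      have hrb := hr0 b (huE hb)
      have h1 : ∀ y ∈ Metric.ball b (r b), ∫⁻ x in Metric.closedBall b (5 * r b), w x ≤
          7 ^ n * volume (Metric.ball b (r b)) * HL w y := by
        intro y hy
        have hs : Metric.closedBall b (5 * r b) ⊆ Metric.ball y (7 * r b) := by
          intro z hz
          rw [Metric.mem_ball] at *
          rw [Metric.mem_closedBall] at hz
          have := dist_triangle_right z y b
          linarith
        calc _ ≤ ∫⁻ x in Metric.ball y (7 * r b), w x := lintegral_mono_set hs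
          _ ≤ volume (Metric.ball y (7 * r b)) * HL w y := lintegral_ball_le_HL w y (by positivity)
          _ = _ := by
            rw [Measure.addHaar_ball_mul_of_pos volume y (by norm_num : (0 : ℝ) < 7),
              Measure.addHaar_ball_center volume b, finrank_euclideanSpace_fin,
              ENNReal.ofReal_pow (by norm_num)]
            norm_num
      calc l * ∫⁻ x in Metric.closedBall b (5 * r b), w x
          = (l * volume (Metric.ball b (r b))) * ((∫⁻ x in Metric.closedBall b (5 * r b), w x) *
              (volume (Metric.ball b (r b)))⁻¹) := by
            have := ENNReal.mul_inv_cancel (Metric.measure_ball_pos volume b hrb).ne'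
              measure_ball_lt_top.ne
            calc _ = l * (∫⁻ x in Metric.closedBall b (5 * r b), w x) *
                (volume (Metric.ball b (r b)) * (volume (Metric.ball b (r b)))⁻¹) := by
                  rw [this, mul_one]
              _ = _ := by ring
        _ ≤ (∫⁻ y in Metric.ball b (r b), g y) * ((∫⁻ x in Metric.closedBall b (5 * r b), w x) *
              (volume (Metric.ball b (r b)))⁻¹) := by
            gcongr
            exact (hr b (huE hb)).le
        _ = ∫⁻ y in Metric.ball b (r b), g y * ((∫⁻ x in Metric.closedBall b (5 * r b), w x) *
              (volume (Metric.ball b (r b)))⁻¹) := (lintegral_mul_const _ hg).symm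
        _ ≤ ∫⁻ y in Metric.ball b (r b), 7 ^ n * (g y * HL w y) := by
            refine setLIntegral_mono' measurableSet_ball fun y hy => ?_
            calc _ ≤ g y * ((7 ^ n * volume (Metric.ball b (r b)) * HL w y) *
                (volume (Metric.ball b (r b)))⁻¹) := by gcongr; exact h1 y hy
              _ = 7 ^ n * (g y * HL w y) *
                (volume (Metric.ball b (r b)) * (volume (Metric.ball b (r b)))⁻¹) := by ring
              _ ≤ 7 ^ n * (g y * HL w y) * 1 := by gcongr; exact ENNReal.mul_inv_le_one _
              _ = _ := mul_one _
        _ = _ := lintegral_const_mul _ (hg.mul (measurable_HL w))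
    have hcov' : E N ⊆ ⋃ b ∈ u, Metric.closedBall b (5 * r b) := by
      intro x hx
      obtain ⟨b, hb, hsub⟩ := hcov x hx
      exact mem_biUnion hb (hsub (Metric.mem_closedBall_self (hr0 x hx).le))
    calc l * ∫⁻ x in E N, w x ≤ l * ∑' b : u, ∫⁻ x in Metric.closedBall (b : Rn n) (5 * r b), w x := by
          gcongr
          have := measure_biUnion_le (volume.withDensity w) hcount
            (fun b => Metric.closedBall b (5 * r b))
          simp only [withDensity_apply'] at this
          exact (lintegral_mono_set hcov').trans this
      _ = ∑' b : u, l * ∫⁻ x in Metric.closedBall (b : Rn n) (5 * r b), w x :=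
          ENNReal.tsum_mul_left.symm
      _ ≤ ∑' b : u, 7 ^ n * ∫⁻ x in Metric.ball (b : Rn n) (r b), g x * HL w x :=
          ENNReal.tsum_le_tsum fun b => hball b b.2
      _ = 7 ^ n * ∫⁻ x in ⋃ b ∈ u, Metric.ball b (r b), g x * HL w x := by
          rw [ENNReal.tsum_mul_left, lintegral_biUnion hcount (fun _ _ => measurableSet_ball) hdisj']
      _ ≤ _ := by gcongr; exact Measure.restrict_le_self
  calc l * ∫⁻ x in {x | l < HL g x}, w x ≤ l * ∫⁻ x in ⋃ N, E N, w x := by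
        gcongr
    _ = ⨆ N, l * ∫⁻ x in E N, w x := by
        rw [setLIntegral_iUnion_of_directed w hEmono.directed_le, ENNReal.mul_iSup]
    _ ≤ _ := iSup_le key

/-! ### Layer-cake formula -/

lemma lintegral_Ioo_rpow {s b : ℝ} (hs : 0 < s) (hb : 0 ≤ b) :
    ∫⁻ t in Ioo (0 : ℝ) b, ENNReal.ofReal (t ^ (s - 1)) = ENNReal.ofReal (b ^ s / s) := by
  have hint : IntervalIntegrable (fun t : ℝ => t ^ (s - 1)) volume 0 b :=
    intervalIntegral.intervalIntegrable_rpow' (by linarith)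
  have h := integral_rpow (a := 0) (b := b) (r := s - 1) (Or.inl (by linarith))
  rw [sub_add_cancel, Real.zero_rpow hs.ne', sub_zero, intervalIntegral.integral_of_le hb] at h
  rw [← h, ofReal_integral_eq_lintegral_ofReal ((intervalIntegrable_iff_integrableOn_Ioc_of_le hb).1 hint)]
  · exact setLIntegral_congr Ioo_ae_eq_Ioc
  · filter_upwards [ae_restrict_mem measurableSet_Ioc] with t ht
    exact Real.rpow_nonneg ht.1.le _

lemma rpow_eq_lintegral_layer (h : ℝ≥0∞) {s : ℝ} (hs : 0 < s) :
    h ^ s = ENNReal.ofReal s * ∫⁻ t in Ioi (0 : ℝ), ENNReal.ofReal (t ^ (s - 1)) *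
      {t : ℝ | ENNReal.ofReal t < h}.indicator 1 t := by
  have hfin : ∀ b : ℝ, 0 ≤ b → ENNReal.ofReal s * ∫⁻ t in Ioi (0 : ℝ), ENNReal.ofReal (t ^ (s - 1)) *
      {t : ℝ | ENNReal.ofReal t < ENNReal.ofReal b}.indicator 1 t = ENNReal.ofReal b ^ s := by
    intro b hb
    have hcongr : ∫⁻ t in Ioi (0 : ℝ), ENNReal.ofReal (t ^ (s - 1)) *
        {t : ℝ | ENNReal.ofReal t < ENNReal.ofReal b}.indicator 1 t =
        ∫⁻ t in Ioi (0 : ℝ), (Iio b).indicator (fun t => ENNReal.ofReal (t ^ (s - 1))) t := by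
      refine setLIntegral_congr_fun measurableSet_Ioi fun t ht => ?_
      have : ENNReal.ofReal t < ENNReal.ofReal b ↔ t < b :=
        ENNReal.ofReal_lt_ofReal_iff_of_nonneg (le_of_lt ht)
      by_cases htb : t < b
      · simp [indicator, htb, this]
      · simp [indicator, htb, this]
    rw [hcongr, setLIntegral_indicator measurableSet_Iio, inter_comm, Ioi_inter_Iio,
      lintegral_Ioo_rpow hs hb, ← ENNReal.ofReal_mul hs.le, mul_div_cancel₀ _ hs.ne',
      ENNReal.ofReal_rpow_of_nonneg hb hs.le]
  rcases eq_or_ne h ⊤ with rfl | hh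
  · symm
    rw [ENNReal.top_rpow_of_pos hs]
    refine ENNReal.eq_top_of_forall_nnreal_le ?_
    intro c
    have := hfin ((c : ℝ) ^ (1 / s)) (by positivity)
    rw [ENNReal.ofReal_rpow_of_nonneg (by positivity) hs.le, ← Real.rpow_mul c.coe_nonneg,
      one_div_mul_cancel hs.ne', Real.rpow_one, ENNReal.ofReal_coe_nnreal] at this
    rw [← this]
    gcongr
    exact le_top
  · lift h to ℝ≥0 using hh
    rw [← ENNReal.ofReal_coe_nnreal, hfin h h.2]

/-- Weighted layer-cake formula for extended-real functions. -/
lemma lintegral_rpow_mul_eq_layer {n : ℕ} (h w : Rn n → ℝ≥0∞) (hh : Measurable h)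
    (hw : Measurable w) {s : ℝ} (hs : 0 < s) :
    ∫⁻ x, h x ^ s * w x = ENNReal.ofReal s * ∫⁻ t in Ioi (0 : ℝ), ENNReal.ofReal (t ^ (s - 1)) *
      ∫⁻ x in {x | ENNReal.ofReal t < h x}, w x := by
  have hset : MeasurableSet {z : Rn n × ℝ | ENNReal.ofReal z.2 < h z.1} :=
    measurableSet_lt (by fun_prop) (by fun_prop)
  have hind : Measurable fun z : Rn n × ℝ => {t : ℝ | ENNReal.ofReal t < h z.1}.indicator
      (1 : ℝ → ℝ≥0∞) z.2 :=
    (measurable_const (a := (1 : ℝ≥0∞))).indicator hset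
  have hpow : Measurable fun z : Rn n × ℝ => ENNReal.ofReal (z.2 ^ (s - 1)) := by fun_prop
  calc ∫⁻ x, h x ^ s * w x
      = ∫⁻ x, ENNReal.ofReal s * ∫⁻ t in Ioi (0 : ℝ), ENNReal.ofReal (t ^ (s - 1)) *
          {t : ℝ | ENNReal.ofReal t < h x}.indicator 1 t * w x := by
        refine lintegral_congr fun x => ?_
        rw [lintegral_mul_const, rpow_eq_lintegral_layer (h x) hs, mul_assoc]
        exact (hpow.mul hind).comp (measurable_prodMk_left (x := x))
    _ = ENNReal.ofReal s * ∫⁻ x, ∫⁻ t in Ioi (0 : ℝ), ENNReal.ofReal (t ^ (s - 1)) *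
          {t : ℝ | ENNReal.ofReal t < h x}.indicator 1 t * w x := by
        rw [lintegral_const_mul' _ _ ENNReal.ofReal_ne_top]
    _ = ENNReal.ofReal s * ∫⁻ t in Ioi (0 : ℝ), ∫⁻ x, ENNReal.ofReal (t ^ (s - 1)) *
          {t : ℝ | ENNReal.ofReal t < h x}.indicator 1 t * w x := by
        rw [lintegral_lintegral_swap]
        exact ((hpow.mul hind).mul (hw.comp measurable_fst)).aemeasurable
    _ = _ := by
        congr 1
        refine lintegral_congr fun t => ?_
        rw [← lintegral_indicator (measurableSet_lt measurable_const hh),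
          ← lintegral_const_mul' _ _ ENNReal.ofReal_ne_top]
        refine lintegral_congr fun x => ?_
        by_cases hx : ENNReal.ofReal t < h x
        · simp [indicator, hx]
        · simp [indicator, hx]

/-! ### The weighted maximal theorem -/

lemma HL_mono {n : ℕ} {g h : Rn n → ℝ≥0∞} (H : ∀ x, g x ≤ h x) (x : Rn n) : HL g x ≤ HL h x := by
  unfold HL
  gcongr with r hr
  exact H _

lemma HL_add_le {n : ℕ} {g h : Rn n → ℝ≥0∞} (hg : Measurable g) (x : Rn n) :
    HL (fun y => g y + h y) x ≤ HL g x + HL h x := by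
  refine iSup₂_le fun r hr => ?_
  rw [lintegral_add_left hg, mul_add]
  exact add_le_add (le_iSup₂ (f := fun (r : ℝ) (_ : 0 < r) =>
      (volume (Metric.ball x r))⁻¹ * ∫⁻ y in Metric.ball x r, g y) r hr)
    (le_iSup₂ (f := fun (r : ℝ) (_ : 0 < r) =>
      (volume (Metric.ball x r))⁻¹ * ∫⁻ y in Metric.ball x r, h y) r hr)

lemma HL_const_le {n : ℕ} (c : ℝ≥0∞) (x : Rn n) : HL (fun _ => c) x ≤ c := by
  refine iSup₂_le fun r hr => ?_
  rw [setLIntegral_const, mul_left_comm]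
  calc _ ≤ c * 1 := by gcongr; exact ENNReal.inv_mul_le_one _
    _ = c := mul_one c

lemma HL_tsum_le {n : ℕ} {g : ℕ → Rn n → ℝ≥0∞} (hg : ∀ k, Measurable (g k)) (c : ℕ → ℝ≥0∞)
    (x : Rn n) : HL (fun y => ∑' k, c k * g k y) x ≤ ∑' k, c k * HL (g k) x := by
  refine iSup₂_le fun r hr => ?_
  rw [lintegral_tsum (fun k => ((hg k).const_mul _).aemeasurable), ← ENNReal.tsum_mul_left]
  refine ENNReal.tsum_le_tsum fun k => ?_
  rw [lintegral_const_mul _ (hg k), mul_left_comm]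
  gcongr
  exact le_iSup₂ (f := fun (r : ℝ) (_ : 0 < r) =>
      (volume (Metric.ball x r))⁻¹ * ∫⁻ y in Metric.ball x r, g k y) r hr

/-- The Fefferman–Stein weighted strong type inequality, by Marcinkiewicz interpolation between
`HL_weak_type` and the trivial `L^∞` bound: at height `t` only the part of `g` above `t / 2`
matters. -/
lemma HL_strong_type (n : ℕ) {q : ℝ} (hq : 1 < q) : ∃ K : ℝ≥0∞, K ≠ ⊤ ∧
    ∀ g w : Rn n → ℝ≥0∞, Measurable g → Measurable w →
      ∫⁻ x, HL g x ^ q * w x ≤ K * ∫⁻ x, g x ^ q * HL w x := by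
  have hq0 : 0 < q := by linarith
  have hq1 : 0 < q - 1 := by linarith
  have hqr : ENNReal.ofReal (q - 1) ≠ 0 := by simpa using hq
  refine ⟨ENNReal.ofReal q * (2 * 7 ^ n * (2 ^ (q - 1) * (ENNReal.ofReal (q - 1))⁻¹)), ?_, ?_⟩
  · have : (7 : ℝ≥0∞) ^ n ≠ ⊤ := ENNReal.pow_ne_top (by norm_num)
    have : (2 : ℝ≥0∞) ^ (q - 1) ≠ ⊤ := ENNReal.rpow_ne_top_of_nonneg hq1.le (by norm_num)
    finiteness
  intro g w hg hw
  have hlevel : ∀ t : ℝ, 0 < t → ENNReal.ofReal (t ^ (q - 1)) *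
      ∫⁻ x in {x | ENNReal.ofReal t < HL g x}, w x ≤ 2 * 7 ^ n * (ENNReal.ofReal (t ^ (q - 1 - 1)) *
        ∫⁻ x in {x | ENNReal.ofReal t < 2 * g x}, g x * HL w x) := by
    intro t ht
    set τ := ENNReal.ofReal (t / 2) with hτ
    have hττ : ENNReal.ofReal t = τ + τ := by
      rw [hτ, ← ENNReal.ofReal_add (by positivity) (by positivity), add_halves]
    have hset : MeasurableSet {x | ENNReal.ofReal t < 2 * g x} :=
      measurableSet_lt measurable_const (hg.const_mul _)
    set g₁ := {x | ENNReal.ofReal t < 2 * g x}.indicator g with hg₁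
    have hg₁m : Measurable g₁ := hg.indicator hset
    have hsplit : ∀ x, g x ≤ g₁ x + τ := by
      intro x
      by_cases hx : ENNReal.ofReal t < 2 * g x
      · have : g₁ x = g x := indicator_of_mem (s := {x | ENNReal.ofReal t < 2 * g x}) hx g
        rw [this]; exact le_self_add
      · rw [not_lt, hττ, ← two_mul] at hx
        exact le_add_left ((ENNReal.mul_le_mul_iff_right (by norm_num) (by norm_num)).1 hx)
    have hHL : ∀ x, HL g x ≤ HL g₁ x + τ := fun x =>
      (HL_mono hsplit x).trans ((HL_add_le hg₁m x).trans (by gcongr; exact HL_const_le τ x))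
    have hsubset : {x | ENNReal.ofReal t < HL g x} ⊆ {x | τ < HL g₁ x} := by
      intro x hx
      have h1 : τ + τ < HL g₁ x + τ := by rw [← hττ]; exact lt_of_lt_of_le hx (hHL x)
      exact lt_of_add_lt_add_right h1
    have hw1 := HL_weak_type g₁ w hg₁m τ
    have heq : ∫⁻ x, g₁ x * HL w x = ∫⁻ x in {x | ENNReal.ofReal t < 2 * g x}, g x * HL w x := by
      rw [← lintegral_indicator hset]
      refine lintegral_congr fun x => ?_
      rw [hg₁, indicator_mul_left]
    have htp : ENNReal.ofReal (t ^ (q - 1)) = 2 * ENNReal.ofReal (t ^ (q - 1 - 1)) * τ := by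
      rw [hτ, ← ENNReal.ofReal_ofNat, ← ENNReal.ofReal_mul (by norm_num),
        ← ENNReal.ofReal_mul (by positivity), Real.rpow_sub_one ht.ne' (q - 1)]
      congr 1
      field_simp
    calc _ ≤ ENNReal.ofReal (t ^ (q - 1)) * ∫⁻ x in {x | τ < HL g₁ x}, w x := by
          gcongr
      _ = 2 * ENNReal.ofReal (t ^ (q - 1 - 1)) * (τ * ∫⁻ x in {x | τ < HL g₁ x}, w x) := by
          rw [htp]; ring
      _ ≤ 2 * ENNReal.ofReal (t ^ (q - 1 - 1)) * (7 ^ n * ∫⁻ x, g₁ x * HL w x) := by gcongr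
      _ = _ := by rw [heq]; ring
  have hback := lintegral_rpow_mul_eq_layer (fun x => 2 * g x) (fun x => g x * HL w x)
    (hg.const_mul _) (hg.mul (measurable_HL w)) hq1
  rw [lintegral_rpow_mul_eq_layer (HL g) w (measurable_HL g) hw hq0, mul_assoc]
  gcongr
  have hconst : (2 : ℝ≥0∞) * 7 ^ n ≠ ⊤ :=
    ENNReal.mul_ne_top (by norm_num) (ENNReal.pow_ne_top (by norm_num))
  calc _ ≤ ∫⁻ t in Ioi (0 : ℝ), 2 * 7 ^ n * (ENNReal.ofReal (t ^ (q - 1 - 1)) *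
        ∫⁻ x in {x | ENNReal.ofReal t < 2 * g x}, g x * HL w x) :=
        setLIntegral_mono' measurableSet_Ioi fun t ht => hlevel t ht
    _ = 2 * 7 ^ n * ((ENNReal.ofReal (q - 1))⁻¹ * ∫⁻ x, (2 * g x) ^ (q - 1) * (g x * HL w x)) := by
        rw [lintegral_const_mul' _ _ hconst, hback, ← mul_assoc (ENNReal.ofReal (q - 1))⁻¹,
          ENNReal.inv_mul_cancel hqr ENNReal.ofReal_ne_top, one_mul]
    _ = 2 * 7 ^ n * ((ENNReal.ofReal (q - 1))⁻¹ * (2 ^ (q - 1) * ∫⁻ x, g x ^ q * HL w x)) := by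
        rw [← lintegral_const_mul' _ _ (ENNReal.rpow_ne_top_of_nonneg hq1.le (by norm_num))]
        congr 3 with x
        have : g x ^ q = g x ^ (q - 1) * g x := by
          conv_lhs => rw [show q = (q - 1) + 1 by ring]
          rw [ENNReal.rpow_add_of_nonneg _ _ hq1.le zero_le_one, ENNReal.rpow_one]
        rw [ENNReal.mul_rpow_of_nonneg _ _ hq1.le, this]
        ring
    _ = _ := by ring

/-- The unweighted maximal theorem is the case `w = 1`. -/
lemma HL_strong_type_unweighted (n : ℕ) {q : ℝ} (hq : 1 < q) : ∃ K : ℝ≥0∞, K ≠ ⊤ ∧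
    ∀ g : Rn n → ℝ≥0∞, Measurable g → ∫⁻ x, HL g x ^ q ≤ K * ∫⁻ x, g x ^ q := by
  obtain ⟨K, hK, h⟩ := HL_strong_type n hq
  refine ⟨K, hK, fun g hg => ?_⟩
  have := h g (fun _ => 1) hg measurable_const
  simp only [mul_one] at this
  refine this.trans ?_
  gcongr with x
  calc _ ≤ g x ^ q * 1 := by gcongr; exact HL_const_le 1 x
    _ = _ := mul_one _

/-! ### Vector-valued weak type below exponent two -/

lemma measurable_HL_iterate {n : ℕ} {F : Rn n → ℝ≥0∞} (hF : Measurable F) (j : ℕ) :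
    Measurable (HL^[j] F) := by
  cases j with
  | zero => exact hF
  | succ j => rw [Function.iterate_succ_apply']; exact measurable_HL _

/-- Rubio de Francia's majorant: the series `u = ∑ (2 b)⁻ʲ Mʲ F` dominates `F`, satisfies the `A₁`
condition `M u ≤ 2 b u`, and has `L^p` norm comparable to that of `F`. Here `b ^ p = 2 K` with `K`
a positive constant of the maximal theorem in `L^p`. -/
lemma exists_A1_majorant (n : ℕ) {p : ℝ} (hp : 1 < p) : ∃ B C : ℝ≥0∞, B ≠ ⊤ ∧ C ≠ ⊤ ∧
    ∀ F : Rn n → ℝ≥0∞, Measurable F → ∃ u : Rn n → ℝ≥0∞, Measurable u ∧ (∀ x, F x ≤ u x) ∧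
      (∀ x, HL u x ≤ B * u x) ∧ ∫⁻ x, u x ^ p ≤ C * ∫⁻ x, F x ^ p := by
  obtain ⟨K₀, hK₀, hM₀⟩ := HL_strong_type_unweighted n hp
  have hp0 : 0 < p := by linarith
  set K := K₀ + 1 with hKdef
  have hK : K ≠ ⊤ := by finiteness
  have hKpos : K ≠ 0 := by simp [hKdef]
  have hM : ∀ g : Rn n → ℝ≥0∞, Measurable g → ∫⁻ x, HL g x ^ p ≤ K * ∫⁻ x, g x ^ p :=
    fun g hg => (hM₀ g hg).trans (by gcongr; exact le_self_add)
  set b := (2 * K) ^ (1 / p) with hb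
  have hbp : b ^ p = 2 * K := by
    rw [hb, ← ENNReal.rpow_mul, one_div_mul_cancel hp0.ne', ENNReal.rpow_one]
  have hb0 : b ≠ 0 := by
    intro h
    rw [h, ENNReal.zero_rpow_of_pos hp0] at hbp
    exact (mul_ne_zero (by norm_num) hKpos) hbp.symm
  have hbt : b ≠ ⊤ := ENNReal.rpow_ne_top_of_nonneg (by positivity) (by finiteness)
  have h2b0 : 2 * b ≠ 0 := mul_ne_zero (by norm_num) hb0
  have h2bt : 2 * b ≠ ⊤ := by finiteness
  refine ⟨2 * b, 2 ^ p * 2, h2bt, ?_, ?_⟩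
  · exact ENNReal.mul_ne_top (ENNReal.rpow_ne_top_of_nonneg hp0.le (by norm_num)) (by norm_num)
  intro F hF
  have hm := measurable_HL_iterate hF
  have hiter : ∀ j, ∫⁻ x, (HL^[j] F) x ^ p ≤ K ^ j * ∫⁻ x, F x ^ p := by
    intro j
    induction j with
    | zero => simp
    | succ j ih =>
      rw [Function.iterate_succ_apply', pow_succ', mul_assoc]
      exact (hM _ (hm j)).trans (by gcongr)
  set u : Rn n → ℝ≥0∞ := fun x => ∑' j, ((2 * b)⁻¹) ^ j * (HL^[j] F) x with hu
  have hum : Measurable u := Measurable.tsum fun j => (hm j).const_mul _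
  refine ⟨u, hum, ?_, ?_, ?_⟩
  · intro x
    have := ENNReal.le_tsum (f := fun j => ((2 * b)⁻¹) ^ j * (HL^[j] F) x) 0
    simpa using this
  · intro x
    calc HL u x ≤ ∑' j, ((2 * b)⁻¹) ^ j * HL (HL^[j] F) x := HL_tsum_le hm _ x
      _ = 2 * b * ∑' j, ((2 * b)⁻¹) ^ (j + 1) * (HL^[j + 1] F) x := by
          rw [← ENNReal.tsum_mul_left]
          congr 1 with j
          rw [Function.iterate_succ_apply', pow_succ', ← mul_assoc, ← mul_assoc,
            ENNReal.mul_inv_cancel h2b0 h2bt, one_mul]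
      _ ≤ 2 * b * u x := by
          gcongr
          exact ENNReal.tsum_comp_le_tsum_of_injective (add_left_injective 1)
            (fun j => ((2 * b)⁻¹) ^ j * (HL^[j] F) x)
  ·
    -- `u ≤ 2 sup_j b⁻ʲ Mʲ F`, and the `p`-th power of a supremum is at most the sum of `p`-th powers
    set T : Rn n → ℝ≥0∞ := fun x => ∑' j, ((b⁻¹) ^ j * (HL^[j] F) x) ^ p with hT
    have huT : ∀ x, u x ^ p ≤ 2 ^ p * T x := by
      intro x
      have hj : ∀ j, (b⁻¹) ^ j * (HL^[j] F) x ≤ T x ^ (1 / p) := by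
        intro j
        rw [one_div, ENNReal.le_rpow_inv_iff hp0]
        exact ENNReal.le_tsum (f := fun j => ((b⁻¹) ^ j * (HL^[j] F) x) ^ p) j
      have : u x ≤ 2 * T x ^ (1 / p) := by
        calc u x = ∑' j, (2⁻¹ : ℝ≥0∞) ^ j * ((b⁻¹) ^ j * (HL^[j] F) x) := by
              refine tsum_congr fun j => ?_
              rw [ENNReal.mul_inv (by norm_num) (by norm_num), mul_pow, mul_assoc]
          _ ≤ ∑' j, (2⁻¹ : ℝ≥0∞) ^ j * T x ^ (1 / p) :=
              ENNReal.tsum_le_tsum fun j => by gcongr; exact hj j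
          _ = 2 * T x ^ (1 / p) := by
              rw [ENNReal.tsum_mul_right, ENNReal.tsum_geometric, ENNReal.one_sub_inv_two, inv_inv]
      calc u x ^ p ≤ (2 * T x ^ (1 / p)) ^ p := by gcongr
        _ = _ := by
          rw [ENNReal.mul_rpow_of_nonneg _ _ hp0.le, ← ENNReal.rpow_mul,
            one_div_mul_cancel hp0.ne', ENNReal.rpow_one]
    have hTint : ∫⁻ x, T x ≤ 2 * ∫⁻ x, F x ^ p := by
      rw [hT, lintegral_tsum fun j => (((hm j).const_mul _).pow_const p).aemeasurable]
      calc _ ≤ ∑' j, (2⁻¹ : ℝ≥0∞) ^ j * ∫⁻ x, F x ^ p := by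
            refine ENNReal.tsum_le_tsum fun j => ?_
            simp_rw [ENNReal.mul_rpow_of_nonneg _ _ hp0.le]
            rw [lintegral_const_mul _ ((hm j).pow_const p)]
            have hc : ((b⁻¹) ^ j) ^ p = (2⁻¹ : ℝ≥0∞) ^ j * (K⁻¹) ^ j := by
              rw [← ENNReal.rpow_natCast, ← ENNReal.rpow_mul, mul_comm, ENNReal.rpow_mul,
                ENNReal.inv_rpow, hbp, ENNReal.mul_inv (by norm_num) (by norm_num),
                ENNReal.rpow_natCast, mul_pow]
            rw [hc]
            calc _ ≤ (2⁻¹ : ℝ≥0∞) ^ j * (K⁻¹) ^ j * (K ^ j * ∫⁻ x, F x ^ p) := by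
                  gcongr; exact hiter j
              _ = (2⁻¹ : ℝ≥0∞) ^ j * (K⁻¹ * K) ^ j * ∫⁻ x, F x ^ p := by
                  rw [mul_pow, mul_assoc, mul_assoc, mul_assoc]
              _ = _ := by rw [ENNReal.inv_mul_cancel hKpos hK, one_pow, mul_one]
        _ = _ := by
            rw [ENNReal.tsum_mul_right, ENNReal.tsum_geometric, ENNReal.one_sub_inv_two, inv_inv]
    calc ∫⁻ x, u x ^ p ≤ ∫⁻ x, 2 ^ p * T x := lintegral_mono huT
      _ = 2 ^ p * ∫⁻ x, T x :=
        lintegral_const_mul' _ _ (ENNReal.rpow_ne_top_of_nonneg hp0.le (by norm_num))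
      _ ≤ 2 ^ p * (2 * ∫⁻ x, F x ^ p) := by gcongr
      _ = _ := by ring

lemma HL_le_of_ae_le_mul_rpow {n : ℕ} {f v u : Rn n → ℝ≥0∞} (hv : Measurable v) (hu : Measurable u)
    {α β : ℝ} (hα : 0 ≤ α) (hβ : 0 ≤ β) (hαβ : α + β = 1)
    (h : ∀ᵐ x, f x ≤ v x ^ α * u x ^ β) (x : Rn n) :
    HL f x ≤ HL v x ^ α * HL u x ^ β := by
  refine iSup₂_le fun r hr => ?_
  set V := (volume (Metric.ball x r))⁻¹
  calc V * ∫⁻ y in Metric.ball x r, f y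
      ≤ V * ∫⁻ y in Metric.ball x r, v y ^ α * u y ^ β := by
        gcongr 1
        exact lintegral_mono_ae (ae_restrict_of_ae h)
    _ ≤ V * ((∫⁻ y in Metric.ball x r, v y) ^ α * (∫⁻ y in Metric.ball x r, u y) ^ β) := by
        gcongr
        exact ENNReal.lintegral_mul_norm_pow_le hv.aemeasurable hu.aemeasurable hα hβ hαβ
    _ = (V * ∫⁻ y in Metric.ball x r, v y) ^ α * (V * ∫⁻ y in Metric.ball x r, u y) ^ β := by
        have hV : V = V ^ α * V ^ β := by
          rw [← ENNReal.rpow_add_of_nonneg _ _ hα hβ, hαβ, ENNReal.rpow_one]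
        rw [ENNReal.mul_rpow_of_nonneg _ _ hα, ENNReal.mul_rpow_of_nonneg _ _ hβ]
        conv_lhs => rw [hV]
        ring
    _ ≤ _ := by
        gcongr
        · exact le_iSup₂ (f := fun (r : ℝ) (_ : 0 < r) =>
            (volume (Metric.ball x r))⁻¹ * ∫⁻ y in Metric.ball x r, v y) r hr
        · exact le_iSup₂ (f := fun (r : ℝ) (_ : 0 < r) =>
            (volume (Metric.ball x r))⁻¹ * ∫⁻ y in Metric.ball x r, u y) r hr

/-- Vector-valued weak type `(p,p)` for `1 < p < 2`. With `u` an `A₁` majorant of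
`F = (∑ a_k²)^{1/2}` and `v_k = a_k^{2/p} u^{1-2/p}`, Hölder's inequality on balls gives
`∑ (M a_k)² ≤ B^{2-p} u^{2-p} ∑ (M v_k)^p`, and both `u` in `L^p` and `∑ (M v_k)^p` in `L¹` are
controlled by `F` in `L^p`. -/
lemma vector_weak_type_lt_two (n : ℕ) {p : ℝ} (hp : 1 < p) (hp2 : p < 2) : ∃ C : ℝ≥0∞, C ≠ ⊤ ∧
    ∀ a : ℕ → Rn n → ℝ≥0∞, (∀ k, Measurable (a k)) → ∀ l : ℝ≥0∞,
      l ^ p * volume {x | l ^ (2 : ℝ) < ∑' k, HL (a k) x ^ (2 : ℝ)} ≤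
        C * ∫⁻ x, (∑' k, a k x ^ (2 : ℝ)) ^ (p / 2) := by
  obtain ⟨K, hK, hM⟩ := HL_strong_type_unweighted n hp
  obtain ⟨B, C, hB, hC, hmaj⟩ := exists_A1_majorant n hp
  have hp0 : 0 < p := by linarith
  have hBt : B ^ (2 - p) ≠ ⊤ := ENNReal.rpow_ne_top_of_nonneg (by linarith) hB
  refine ⟨1 + (C + B ^ (2 - p) * K), by finiteness, ?_⟩
  intro a ha l
  set S : Rn n → ℝ≥0∞ := fun x => ∑' k, a k x ^ (2 : ℝ) with hS
  have hSm : Measurable S := Measurable.tsum fun k => (ha k).pow_const _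
  rcases eq_or_ne (∫⁻ x, S x ^ (p / 2)) ⊤ with htop | hfin
  · rw [htop, ENNReal.mul_top (by simp)]
    exact le_top
  obtain ⟨u, hum, hFu, hA1, hup⟩ := hmaj (fun x => S x ^ (1 / 2 : ℝ)) (hSm.pow_const _)
  have hFp : ∀ x, (S x ^ (1 / 2 : ℝ)) ^ p = S x ^ (p / 2) := fun x => by
    rw [← ENNReal.rpow_mul]; congr 1; ring
  simp_rw [hFp] at hup
  have huae : ∀ᵐ x, u x < ⊤ := by
    have h := ae_lt_top (hum.pow_const p) (hup.trans_lt (by finiteness)).ne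
    filter_upwards [h] with x hx
    exact (ENNReal.rpow_lt_top_iff_of_pos hp0).1 hx
  set v : ℕ → Rn n → ℝ≥0∞ := fun k x => a k x ^ (2 / p) * u x ^ (1 - 2 / p) with hv
  have hvm : ∀ k, Measurable (v k) := fun k => ((ha k).pow_const _).mul (hum.pow_const _)
  have hau : ∀ k x, a k x ≤ u x := fun k x => by
    refine le_trans ?_ (hFu x)
    rw [one_div, ENNReal.le_rpow_inv_iff (by norm_num)]
    exact ENNReal.le_tsum (f := fun k => a k x ^ (2 : ℝ)) k
  have hfac : ∀ k, ∀ᵐ x, a k x ≤ v k x ^ (p / 2) * u x ^ (1 - p / 2) := by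
    intro k
    filter_upwards [huae] with x hx
    rcases eq_or_ne (u x) 0 with h0 | h0
    · have : a k x = 0 := le_antisymm ((hau k x).trans h0.le) bot_le
      rw [this]; exact bot_le
    · rw [hv]
      simp only
      rw [ENNReal.mul_rpow_of_nonneg _ _ (by positivity), ← ENNReal.rpow_mul, ← ENNReal.rpow_mul,
        mul_assoc, ← ENNReal.rpow_add _ _ h0 hx.ne]
      have e1 : 2 / p * (p / 2) = 1 := by field_simp
      have e2 : (1 - 2 / p) * (p / 2) + (1 - p / 2) = 0 := by field_simp; ring
      rw [e1, e2, ENNReal.rpow_one, ENNReal.rpow_zero, mul_one]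
  set P : Rn n → ℝ≥0∞ := fun x => ∑' k, HL (v k) x ^ p with hP
  have hPm : Measurable P := Measurable.tsum fun k => (measurable_HL _).pow_const _
  have hQ : ∀ x, ∑' k, HL (a k) x ^ (2 : ℝ) ≤ u x ^ (2 - p) * (B ^ (2 - p) * P x) := by
    intro x
    rw [hP, ← ENNReal.tsum_mul_left, ← ENNReal.tsum_mul_left]
    refine ENNReal.tsum_le_tsum fun k => ?_
    calc HL (a k) x ^ (2 : ℝ)
        ≤ (HL (v k) x ^ (p / 2) * HL u x ^ (1 - p / 2)) ^ (2 : ℝ) := by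
          gcongr
          exact HL_le_of_ae_le_mul_rpow (hvm k) hum (by positivity) (by linarith) (by ring)
            (hfac k) x
      _ = HL (v k) x ^ p * HL u x ^ (2 - p) := by
          rw [ENNReal.mul_rpow_of_nonneg _ _ (by norm_num), ← ENNReal.rpow_mul, ← ENNReal.rpow_mul]
          congr 2 <;> ring
      _ ≤ HL (v k) x ^ p * (B * u x) ^ (2 - p) := by
          refine mul_le_mul_right (ENNReal.rpow_le_rpow (hA1 x) (by linarith)) _
      _ = _ := by
          rw [ENNReal.mul_rpow_of_nonneg _ _ (by linarith)]; ring
  have hvp : ∀ x, ∑' k, v k x ^ p ≤ S x ^ (p / 2) := by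
    intro x
    have e : ∀ k, v k x ^ p = a k x ^ (2 : ℝ) * u x ^ (p - 2) := by
      intro k
      rw [hv]
      simp only
      rw [ENNReal.mul_rpow_of_nonneg _ _ hp0.le, ← ENNReal.rpow_mul, ← ENNReal.rpow_mul]
      congr 2 <;> field_simp
    simp_rw [e]
    rw [ENNReal.tsum_mul_right]
    change S x * _ ≤ _
    rcases eq_or_ne (S x) 0 with h0 | h0
    · simp [h0]
    rcases eq_or_ne (S x) ⊤ with ht | ht
    · rw [ht, ENNReal.top_rpow_of_pos (by positivity)]; exact le_top
    calc S x * u x ^ (p - 2) ≤ S x * (S x ^ (1 / 2 : ℝ)) ^ (p - 2) := by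
          gcongr 1
          rw [show p - 2 = -(2 - p) by ring, ENNReal.rpow_neg, ENNReal.rpow_neg,
            ENNReal.inv_le_inv]
          exact ENNReal.rpow_le_rpow (hFu x) (by linarith)
      _ = S x ^ (p / 2) := by
          rw [← ENNReal.rpow_mul]
          nth_rewrite 1 [← ENNReal.rpow_one (S x)]
          rw [← ENNReal.rpow_add _ _ h0 ht]
          congr 1; ring
  have hPint : ∫⁻ x, P x ≤ K * ∫⁻ x, S x ^ (p / 2) := by
    rw [hP, lintegral_tsum fun k => ((measurable_HL _).pow_const _).aemeasurable]
    calc _ ≤ ∑' k, K * ∫⁻ x, v k x ^ p := ENNReal.tsum_le_tsum fun k => hM _ (hvm k)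
      _ = K * ∫⁻ x, ∑' k, v k x ^ p := by
        rw [ENNReal.tsum_mul_left, lintegral_tsum fun k => ((hvm k).pow_const _).aemeasurable]
      _ ≤ _ := by gcongr with x; exact hvp x
  have hsub : {x | l ^ (2 : ℝ) < ∑' k, HL (a k) x ^ (2 : ℝ)} ⊆
      {x | l ^ p ≤ u x ^ p} ∪ {x | l ^ p ≤ B ^ (2 - p) * P x} := by
    intro x hx
    by_contra hcon
    simp only [mem_union, mem_ofPred_eq, not_or, not_le] at hcon hx
    have h1 : u x ≤ l := (ENNReal.rpow_le_rpow_iff hp0).1 hcon.1.le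
    refine absurd (hx.trans_le (hQ x)) (not_lt.2 ?_)
    calc u x ^ (2 - p) * (B ^ (2 - p) * P x) ≤ l ^ (2 - p) * l ^ p := by
          exact mul_le_mul' (ENNReal.rpow_le_rpow h1 (by linarith)) hcon.2.le
      _ = l ^ (2 : ℝ) := by
          rw [← ENNReal.rpow_add_of_nonneg _ _ (by linarith) hp0.le]; congr 1; ring
  calc _ ≤ l ^ p * (volume {x | l ^ p ≤ u x ^ p} + volume {x | l ^ p ≤ B ^ (2 - p) * P x}) := by
        gcongr
        exact (measure_mono hsub).trans (measure_union_le _ _)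
    _ ≤ (∫⁻ x, u x ^ p) + ∫⁻ x, B ^ (2 - p) * P x := by
        rw [mul_add]
        exact add_le_add (mul_meas_ge_le_lintegral (hum.pow_const p) _)
          (mul_meas_ge_le_lintegral (hPm.const_mul _) _)
    _ ≤ C * (∫⁻ x, S x ^ (p / 2)) + B ^ (2 - p) * (K * ∫⁻ x, S x ^ (p / 2)) := by
        rw [lintegral_const_mul _ hPm]
        gcongr
    _ = (C + B ^ (2 - p) * K) * ∫⁻ x, S x ^ (p / 2) := by ring
    _ ≤ _ := mul_le_mul_left le_add_self _

/-! ### Vector-valued weak type above exponent two -/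

/-- Vector-valued weak type `(2s,2s)` for `s > 1`, by duality: the weighted inequality with weight
`1_E` gives `l² |E| ≤ K ∫ (∑ a_k²) M 1_E` for `E` a bounded piece of the level set, and Hölder's
inequality bounds the right side by a multiple of `|E|^{1-1/s}`. -/
lemma vector_weak_type_gt_two (n : ℕ) {s : ℝ} (hs : 1 < s) : ∃ C : ℝ≥0∞, C ≠ ⊤ ∧
    ∀ a : ℕ → Rn n → ℝ≥0∞, (∀ k, Measurable (a k)) → ∀ l : ℝ≥0∞,
      l ^ (2 * s) * volume {x | l ^ (2 : ℝ) < ∑' k, HL (a k) x ^ (2 : ℝ)} ≤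
        C * ∫⁻ x, (∑' k, a k x ^ (2 : ℝ)) ^ s := by
  have hs0 : 0 < s := by linarith
  have hs1 : 0 < s - 1 := by linarith
  have hs' : 1 < s / (s - 1) := by rw [lt_div_iff₀ hs1]; linarith
  obtain ⟨K, hK, hM⟩ := HL_strong_type n (q := 2) (by norm_num)
  obtain ⟨K', hK', hM'⟩ := HL_strong_type_unweighted n hs'
  have hKs : K ^ s ≠ ⊤ := ENNReal.rpow_ne_top_of_nonneg hs0.le hK
  have hKs' : K' ^ (s - 1) ≠ ⊤ := ENNReal.rpow_ne_top_of_nonneg hs1.le hK'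
  refine ⟨K ^ s * K' ^ (s - 1), by finiteness, ?_⟩
  intro a ha l
  set S : Rn n → ℝ≥0∞ := fun x => ∑' k, a k x ^ (2 : ℝ) with hS
  have hSm : Measurable S := Measurable.tsum fun k => (ha k).pow_const _
  set Q : Rn n → ℝ≥0∞ := fun x => ∑' k, HL (a k) x ^ (2 : ℝ) with hQ
  have hQm : Measurable Q := Measurable.tsum fun k => (measurable_HL _).pow_const _
  set X := ∫⁻ x, S x ^ s with hX
  let E : ℕ → Set (Rn n) := fun N => {x | l ^ (2 : ℝ) < Q x} ∩ Metric.ball 0 N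
  have hEm : ∀ N, MeasurableSet (E N) := fun N =>
    (measurableSet_lt measurable_const hQm).inter measurableSet_ball
  have key : ∀ N, l ^ (2 * s) * volume (E N) ≤ K ^ s * K' ^ (s - 1) * X := by
    intro N
    set m := volume (E N) with hm
    have hmt : m ≠ ⊤ := ((measure_mono inter_subset_right).trans_lt measure_ball_lt_top).ne
    rcases eq_or_ne m 0 with h0 | h0
    · simp [h0]
    set χ : Rn n → ℝ≥0∞ := (E N).indicator 1 with hχ
    have hχm : Measurable χ := measurable_one.indicator (hEm N)
    have hHχ : ∫⁻ x, HL χ x ^ (s / (s - 1)) ≤ K' * m := by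
      refine (hM' χ hχm).trans_eq ?_
      congr 1
      rw [hm, ← lintegral_indicator_one (hEm N)]
      refine lintegral_congr fun x => ?_
      by_cases hx : x ∈ E N
      · simp [hχ, hx]
      · simp [hχ, hx, show 0 < s / (s - 1) by positivity]
    have h1 : l ^ (2 : ℝ) * m ≤ K * (X ^ (1 / s) * (K' * m) ^ (1 - 1 / s)) := by
      calc l ^ (2 : ℝ) * m = ∫⁻ x in E N, l ^ (2 : ℝ) := by rw [setLIntegral_const]
        _ ≤ ∫⁻ x in E N, Q x := setLIntegral_mono' (hEm N) fun x hx => (le_of_lt hx.1)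
        _ = ∫⁻ x, ∑' k, HL (a k) x ^ (2 : ℝ) * χ x := by
            rw [← lintegral_indicator (hEm N)]
            refine lintegral_congr fun x => ?_
            rw [ENNReal.tsum_mul_right]
            by_cases hx : x ∈ E N
            · simp [hχ, hx, hQ]
            · simp [hχ, hx]
        _ = ∑' k, ∫⁻ x, HL (a k) x ^ (2 : ℝ) * χ x :=
            lintegral_tsum fun k => (((measurable_HL _).pow_const _).mul hχm).aemeasurable
        _ ≤ ∑' k, K * ∫⁻ x, a k x ^ (2 : ℝ) * HL χ x :=
            ENNReal.tsum_le_tsum fun k => hM _ _ (ha k) hχm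
        _ = K * ∫⁻ x, S x * HL χ x := by
            have h : ∀ k, Measurable fun x => a k x ^ (2 : ℝ) * HL χ x := fun k =>
              ((ha k).pow_const _).mul (measurable_HL _)
            rw [ENNReal.tsum_mul_left, ← lintegral_tsum fun k => (h k).aemeasurable]
            simp_rw [ENNReal.tsum_mul_right]
            rfl
        _ = K * ∫⁻ x, (S x ^ s) ^ (1 / s) * (HL χ x ^ (s / (s - 1))) ^ (1 - 1 / s) := by
            congr 1
            refine lintegral_congr fun x => ?_
            have e1 : s * (1 / s) = 1 := by field_simp
            have e2 : s / (s - 1) * (1 - 1 / s) = 1 := by field_simp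
            rw [← ENNReal.rpow_mul, ← ENNReal.rpow_mul, e1, e2, ENNReal.rpow_one, ENNReal.rpow_one]
        _ ≤ K * (X ^ (1 / s) * (∫⁻ x, HL χ x ^ (s / (s - 1))) ^ (1 - 1 / s)) := by
            gcongr
            refine ENNReal.lintegral_mul_norm_pow_le (hSm.pow_const _).aemeasurable
              ((measurable_HL _).pow_const _).aemeasurable (by positivity) ?_ (by ring)
            rw [sub_nonneg, div_le_one hs0]; exact hs.le
        _ ≤ _ := by
            gcongr
            rw [sub_nonneg, div_le_one hs0]; exact hs.le
    have h2 : (l ^ (2 * s) * m) * m ^ (s - 1) ≤ (K ^ s * K' ^ (s - 1) * X) * m ^ (s - 1) := by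
      have := ENNReal.rpow_le_rpow h1 hs0.le
      simp only [ENNReal.mul_rpow_of_nonneg _ _ hs0.le] at this
      rw [← ENNReal.rpow_mul, ← ENNReal.rpow_mul, ← ENNReal.rpow_mul,
        one_div_mul_cancel hs0.ne', ENNReal.rpow_one,
        show (1 - 1 / s) * s = s - 1 by field_simp, ENNReal.mul_rpow_of_nonneg _ _ hs1.le] at this
      have hms : m ^ s = m * m ^ (s - 1) := by
        nth_rewrite 2 [← ENNReal.rpow_one m]
        rw [← ENNReal.rpow_add _ _ h0 hmt]; congr 1; ring
      rw [hms] at this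
      calc _ = l ^ (2 * s) * (m * m ^ (s - 1)) := by ring
        _ ≤ _ := this
        _ = _ := by ring
    refine (ENNReal.mul_le_mul_iff_left ?_ ?_).1 h2
    · exact (ENNReal.rpow_pos (pos_iff_ne_zero.2 h0) hmt).ne'
    · exact ENNReal.rpow_ne_top_of_nonneg hs1.le hmt
  have hU : {x | l ^ (2 : ℝ) < Q x} = ⋃ N, E N := by
    rw [← inter_iUnion, Metric.iUnion_ball_nat, inter_univ]
  have hEmono : Monotone E := fun i j hij => inter_subset_inter_right _
    (Metric.ball_subset_ball (by exact_mod_cast hij))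
  rw [hU, hEmono.measure_iUnion, ENNReal.mul_iSup]
  exact iSup_le key

/-! ### Interpolation in weak `L^p` -/

lemma lintegral_rpow_eq_layer {n : ℕ} (h : Rn n → ℝ≥0∞) (hh : Measurable h) {s : ℝ} (hs : 0 < s) :
    ∫⁻ x, h x ^ s = ENNReal.ofReal s * ∫⁻ t in Ioi (0 : ℝ), ENNReal.ofReal (t ^ (s - 1)) *
      volume {x | ENNReal.ofReal t < h x} := by
  simpa using lintegral_rpow_mul_eq_layer h (fun _ => 1) hh measurable_const hs

/-- A function with weak `L^p` tails, cut off from below at height `b`, is in `L^q` for `q < p`. -/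
lemma lintegral_high_part_le {n : ℕ} {F : Rn n → ℝ≥0∞} (hF : Measurable F) {p q : ℝ} (hq : 0 < q)
    (hqp : q < p) {W : ℝ≥0∞} (hW : W ≠ ⊤)
    (htail : ∀ t : ℝ, 0 < t → volume {x | ENNReal.ofReal t < F x} ≤ W * ENNReal.ofReal (t ^ (-p)))
    {b : ℝ} (hb : 0 < b) :
    ∫⁻ x, ({x | ENNReal.ofReal b < F x}.indicator F x) ^ q ≤
      ENNReal.ofReal (q * (1 / q + 1 / (p - q))) * W * ENNReal.ofReal (b ^ (q - p)) := by
  have hpq : 0 < p - q := by linarith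
  have hset : MeasurableSet {x | ENNReal.ofReal b < F x} := measurableSet_lt measurable_const hF
  rw [lintegral_rpow_eq_layer _ (hF.indicator hset) hq, ENNReal.ofReal_mul hq.le, mul_assoc, mul_assoc]
  gcongr
  have hsub : ∀ t : ℝ, {x | ENNReal.ofReal t < {x | ENNReal.ofReal b < F x}.indicator F x} ⊆
      {x | ENNReal.ofReal b < F x} ∩ {x | ENNReal.ofReal t < F x} := by
    intro t x hx
    have hx' : ENNReal.ofReal t < {x | ENNReal.ofReal b < F x}.indicator F x := hx
    by_cases h : x ∈ {x | ENNReal.ofReal b < F x}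
    · rw [indicator_of_mem h] at hx'
      exact ⟨h, hx'⟩
    · rw [indicator_of_notMem h] at hx'
      exact absurd hx' not_lt_bot
  rw [← Ioc_union_Ioi_eq_Ioi hb.le, lintegral_union measurableSet_Ioi
    (Set.disjoint_left.2 fun x h1 h2 => absurd h1.2 (not_le.2 h2))]
  have h1 : ∫⁻ t in Ioc (0 : ℝ) b, ENNReal.ofReal (t ^ (q - 1)) *
      volume {x | ENNReal.ofReal t < {x | ENNReal.ofReal b < F x}.indicator F x} ≤
      ENNReal.ofReal (1 / q) * (W * ENNReal.ofReal (b ^ (q - p))) := by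
    calc _ ≤ ∫⁻ t in Ioc (0 : ℝ) b, ENNReal.ofReal (t ^ (q - 1)) *
          (W * ENNReal.ofReal (b ^ (-p))) := by
          gcongr with t
          exact (measure_mono ((hsub t).trans inter_subset_left)).trans (htail b hb)
      _ = ENNReal.ofReal (b ^ q / q) * (W * ENNReal.ofReal (b ^ (-p))) := by
          rw [lintegral_mul_const' _ _ (by finiteness), ← lintegral_Ioo_rpow hq hb.le]
          congr 1
          exact (setLIntegral_congr Ioo_ae_eq_Ioc).symm
      _ = _ := by
          rw [sub_eq_add_neg, Real.rpow_add hb, div_eq_mul_one_div,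
            ENNReal.ofReal_mul (by positivity), ENNReal.ofReal_mul (by positivity)]
          ring
  have h2 : ∫⁻ t in Ioi b, ENNReal.ofReal (t ^ (q - 1)) *
      volume {x | ENNReal.ofReal t < {x | ENNReal.ofReal b < F x}.indicator F x} ≤
      ENNReal.ofReal (1 / (p - q)) * (W * ENNReal.ofReal (b ^ (q - p))) := by
    have hlt : q - p - 1 < -1 := by linarith
    calc _ ≤ ∫⁻ t in Ioi b, W * ENNReal.ofReal (t ^ (q - p - 1)) := by
          refine setLIntegral_mono' measurableSet_Ioi fun t ht => ?_
          have ht0 : 0 < t := hb.trans ht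
          calc _ ≤ ENNReal.ofReal (t ^ (q - 1)) * (W * ENNReal.ofReal (t ^ (-p))) := by
                gcongr
                exact (measure_mono ((hsub t).trans inter_subset_right)).trans (htail t ht0)
            _ = _ := by
                rw [show q - p - 1 = (q - 1) + (-p) by ring, Real.rpow_add ht0,
                  ENNReal.ofReal_mul (by positivity)]
                ring
      _ = W * ENNReal.ofReal (b ^ (q - p) * (1 / (p - q))) := by
          rw [lintegral_const_mul' _ _ hW, ← ofReal_integral_eq_lintegral_ofReal
            (integrableOn_Ioi_rpow_of_lt hlt hb), integral_Ioi_rpow_of_lt hlt hb, sub_add_cancel]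
          · congr 2
            rw [← neg_sub p q, div_neg, neg_div, neg_neg]
            ring
          · filter_upwards [ae_restrict_mem measurableSet_Ioi] with t ht
            exact Real.rpow_nonneg (hb.trans ht).le _
      _ = _ := by rw [ENNReal.ofReal_mul (by positivity)]; ring
  rw [ENNReal.ofReal_add (by positivity) (by positivity), add_mul]
  exact add_le_add h1 h2

/-- A function with weak `L^p` tails, truncated at height `b`, is in `L^q` for `q > p`. -/
lemma lintegral_low_part_le {n : ℕ} {F : Rn n → ℝ≥0∞} (hF : Measurable F) {p q : ℝ} (hq : 0 < q)
    (hpq : p < q) {W : ℝ≥0∞} (hW : W ≠ ⊤)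
    (htail : ∀ t : ℝ, 0 < t → volume {x | ENNReal.ofReal t < F x} ≤ W * ENNReal.ofReal (t ^ (-p)))
    {b : ℝ} (hb : 0 < b) :
    ∫⁻ x, ({x | ENNReal.ofReal b < F x}ᶜ.indicator F x) ^ q ≤
      ENNReal.ofReal (q * (1 / (q - p))) * W * ENNReal.ofReal (b ^ (q - p)) := by
  have hqp : 0 < q - p := by linarith
  have hset : MeasurableSet {x | ENNReal.ofReal b < F x} := measurableSet_lt measurable_const hF
  rw [lintegral_rpow_eq_layer _ (hF.indicator hset.compl) hq, ENNReal.ofReal_mul hq.le, mul_assoc,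
    mul_assoc]
  gcongr
  have hsub : ∀ t : ℝ, {x | ENNReal.ofReal t < {x | ENNReal.ofReal b < F x}ᶜ.indicator F x} ⊆
      {x | ENNReal.ofReal t < F x ∧ t < b} := by
    intro t x hx
    have hx' : ENNReal.ofReal t < {x | ENNReal.ofReal b < F x}ᶜ.indicator F x := hx
    by_cases h : x ∈ {x | ENNReal.ofReal b < F x}ᶜ
    · rw [indicator_of_mem h] at hx'
      have h' : F x ≤ ENNReal.ofReal b := not_lt.1 h
      exact ⟨hx', (ENNReal.ofReal_lt_ofReal_iff hb).1 (hx'.trans_le h')⟩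
    · rw [indicator_of_notMem h] at hx'
      exact absurd hx' not_lt_bot
  calc _ ≤ ∫⁻ t in Ioi (0 : ℝ), (Iio b).indicator
        (fun t => W * ENNReal.ofReal (t ^ (q - p - 1))) t := by
        refine setLIntegral_mono' measurableSet_Ioi fun t ht => ?_
        have ht0 : 0 < t := ht
        by_cases htb : t < b
        · rw [indicator_of_mem (show t ∈ Iio b from htb)]
          calc _ ≤ ENNReal.ofReal (t ^ (q - 1)) * (W * ENNReal.ofReal (t ^ (-p))) := by
                gcongr
                exact (measure_mono ((hsub t).trans fun x hx => hx.1)).trans (htail t ht0)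
            _ = _ := by
                rw [show q - p - 1 = (q - 1) + (-p) by ring, Real.rpow_add ht0,
                  ENNReal.ofReal_mul (by positivity)]
                ring
        · have : {x | ENNReal.ofReal t < {x | ENNReal.ofReal b < F x}ᶜ.indicator F x} = ∅ :=
            subset_empty_iff.1 ((hsub t).trans fun x hx => absurd hx.2 htb)
          rw [this]
          simp
    _ = W * ENNReal.ofReal (b ^ (q - p) / (q - p)) := by
        rw [setLIntegral_indicator measurableSet_Iio, inter_comm, Ioi_inter_Iio,
          lintegral_const_mul' _ _ hW, lintegral_Ioo_rpow hqp hb.le]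
    _ = _ := by
        rw [div_eq_mul_one_div, ENNReal.ofReal_mul (by positivity)]
        ring

lemma rpow_mul_le_of_half_rpow_mul_le {τ V Y : ℝ≥0∞} {p q : ℝ} (hq : 0 < q) (h0 : τ ≠ 0) (ht : τ ≠ ⊤)
    (h : (τ / 2) ^ q * V ≤ Y * τ ^ (q - p)) : τ ^ p * V ≤ 2 ^ q * Y := by
  have h2 : (2 : ℝ≥0∞) ^ q * (τ / 2) ^ q = τ ^ q := by
    rw [← ENNReal.mul_rpow_of_nonneg _ _ hq.le, ENNReal.mul_div_cancel (by norm_num) (by norm_num)]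
  calc τ ^ p * V = τ ^ (p - q) * (2 ^ q * ((τ / 2) ^ q * V)) := by
        rw [← mul_assoc (2 ^ q), h2, ← mul_assoc, ← ENNReal.rpow_add _ _ h0 ht, sub_add_cancel]
    _ ≤ τ ^ (p - q) * (2 ^ q * (Y * τ ^ (q - p))) := by gcongr
    _ = 2 ^ q * Y * (τ ^ (p - q) * τ ^ (q - p)) := by ring
    _ = _ := by
        rw [← ENNReal.rpow_add _ _ h0 ht, sub_add_sub_cancel, sub_self, ENNReal.rpow_zero, mul_one]

lemma add_rpow_two_le (a b : ℝ≥0∞) : (a + b) ^ (2 : ℝ) ≤ 2 * a ^ (2 : ℝ) + 2 * b ^ (2 : ℝ) := by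
  have h := ENNReal.rpow_add_le_mul_rpow_add_rpow a b (p := 2) (by norm_num)
  rw [show (2 : ℝ) - 1 = 1 by norm_num, ENNReal.rpow_one, mul_add] at h
  exact h

/-- The vector-valued weak type estimates at exponents below and above `p`, applied to the
parts of the sequence where `F = (∑ a_k²)^{1/2}` is larger, respectively smaller, than the
level `t`, give the distributional estimate in weak `L^p`. -/
lemma vector_distribution_le (n : ℕ) {p : ℝ} (hp : 1 < p) : ∃ D : ℝ≥0∞, D ≠ ⊤ ∧
    ∀ a : ℕ → Rn n → ℝ≥0∞, (∀ k, Measurable (a k)) → ∀ W : ℝ≥0∞, W ≠ ⊤ →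
      (∀ t : ℝ, 0 < t → volume {x | ENNReal.ofReal t < (∑' k, a k x ^ (2 : ℝ)) ^ (1 / 2 : ℝ)} ≤
        W * ENNReal.ofReal (t ^ (-p))) →
      ∀ t : ℝ, 0 < t → ENNReal.ofReal t ^ p *
        volume {x | ENNReal.ofReal t ^ (2 : ℝ) < ∑' k, HL (a k) x ^ (2 : ℝ)} ≤ D * W := by
  obtain ⟨q, hq1, hq⟩ := exists_between (show 1 < min p 2 from lt_min hp (by norm_num))
  obtain ⟨hqp, hq2⟩ := lt_min_iff.1 hq
  have hq0 : 0 < q := by linarith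
  obtain ⟨C₀, hC₀, hlow⟩ := vector_weak_type_lt_two n hq1 hq2
  obtain ⟨C₁, hC₁, hhigh⟩ := vector_weak_type_gt_two n hp
  have e0 : (2 : ℝ≥0∞) ^ q ≠ ⊤ := ENNReal.rpow_ne_top_of_nonneg hq0.le (by norm_num)
  have e1 : (2 : ℝ≥0∞) ^ (2 * p) ≠ ⊤ := ENNReal.rpow_ne_top_of_nonneg (by linarith) (by norm_num)
  refine ⟨2 ^ q * (C₀ * ENNReal.ofReal (q * (1 / q + 1 / (p - q)))) +
    2 ^ (2 * p) * (C₁ * ENNReal.ofReal (2 * p * (1 / (2 * p - p)))), by finiteness, ?_⟩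
  intro a ha W hW htail t ht
  set F : Rn n → ℝ≥0∞ := fun x => (∑' k, a k x ^ (2 : ℝ)) ^ (1 / 2 : ℝ) with hFdef
  have hF : Measurable F := (Measurable.tsum fun k => (ha k).pow_const _).pow_const _
  set A : Set (Rn n) := {x | ENNReal.ofReal t < F x} with hA
  have hAm : MeasurableSet A := measurableSet_lt measurable_const hF
  set τ := ENNReal.ofReal t with hτ
  have hτ0 : τ ≠ 0 := by simpa [hτ] using ht
  have hτt : τ ≠ ⊤ := ENNReal.ofReal_ne_top
  have hτr : ∀ r : ℝ, ENNReal.ofReal (t ^ r) = τ ^ r := fun r =>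
    (ENNReal.ofReal_rpow_of_pos ht).symm
  have hpow : ∀ (D : Set (Rn n)) (r : ℝ), 0 < r → ∀ x,
      (∑' k, (D.indicator (a k) x) ^ (2 : ℝ)) ^ (r / 2) = (D.indicator F x) ^ r := by
    intro D r hr x
    by_cases hx : x ∈ D
    · simp only [indicator_of_mem hx, hFdef]
      rw [← ENNReal.rpow_mul]
      congr 1
      ring
    · simp [indicator_of_notMem hx, hr]
  have hg := hlow (fun k => A.indicator (a k)) (fun k => (ha k).indicator hAm) (τ / 2)
  have hh := hhigh (fun k => Aᶜ.indicator (a k)) (fun k => (ha k).indicator hAm.compl) (τ / 2)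
  have hpow' := hpow Aᶜ (2 * p) (by linarith)
  rw [show 2 * p / 2 = p by ring] at hpow'
  simp_rw [hpow A q hq0] at hg
  simp_rw [hpow'] at hh
  set Vg := volume {x | (τ / 2) ^ (2 : ℝ) < ∑' k, HL (A.indicator (a k)) x ^ (2 : ℝ)} with hVg
  set Vh := volume {x | (τ / 2) ^ (2 : ℝ) < ∑' k, HL (Aᶜ.indicator (a k)) x ^ (2 : ℝ)} with hVh
  have hg2 : τ ^ p * Vg ≤ 2 ^ q * (C₀ * (ENNReal.ofReal (q * (1 / q + 1 / (p - q))) * W)) := by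
    refine rpow_mul_le_of_half_rpow_mul_le hq0 hτ0 hτt (hg.trans ?_)
    rw [mul_assoc C₀, ← hτr]
    gcongr
    exact lintegral_high_part_le hF hq0 hqp hW htail ht
  have hh2 : τ ^ p * Vh ≤ 2 ^ (2 * p) * (C₁ * (ENNReal.ofReal (2 * p * (1 / (2 * p - p))) * W)) := by
    refine rpow_mul_le_of_half_rpow_mul_le (by linarith) hτ0 hτt (hh.trans ?_)
    rw [mul_assoc C₁, ← hτr]
    gcongr
    exact lintegral_low_part_le hF (by linarith) (by linarith) hW htail ht
  have hQ : ∀ x, ∑' k, HL (a k) x ^ (2 : ℝ) ≤ 2 * (∑' k, HL (A.indicator (a k)) x ^ (2 : ℝ)) +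
      2 * ∑' k, HL (Aᶜ.indicator (a k)) x ^ (2 : ℝ) := by
    intro x
    rw [← ENNReal.tsum_mul_left, ← ENNReal.tsum_mul_left, ← ENNReal.tsum_add]
    refine ENNReal.tsum_le_tsum fun k => ?_
    have hsplit : a k = fun y => A.indicator (a k) y + Aᶜ.indicator (a k) y := by
      funext y
      exact (congrFun (indicator_self_add_compl A (a k)) y).symm
    calc HL (a k) x ^ (2 : ℝ)
        ≤ (HL (A.indicator (a k)) x + HL (Aᶜ.indicator (a k)) x) ^ (2 : ℝ) := by
          gcongr
          conv_lhs => rw [hsplit]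
          exact HL_add_le ((ha k).indicator hAm) x
      _ ≤ _ := add_rpow_two_le _ _
  have hsub : {x | τ ^ (2 : ℝ) < ∑' k, HL (a k) x ^ (2 : ℝ)} ⊆
      {x | (τ / 2) ^ (2 : ℝ) < ∑' k, HL (A.indicator (a k)) x ^ (2 : ℝ)} ∪
      {x | (τ / 2) ^ (2 : ℝ) < ∑' k, HL (Aᶜ.indicator (a k)) x ^ (2 : ℝ)} := by
    intro x hx
    by_contra hcon
    simp only [mem_union, mem_ofPred_eq, not_or, not_lt] at hcon hx
    refine absurd (hx.trans_le (hQ x)) (not_lt.2 ?_)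
    calc _ ≤ 2 * (τ / 2) ^ (2 : ℝ) + 2 * (τ / 2) ^ (2 : ℝ) := by
          gcongr
          exacts [hcon.1, hcon.2]
      _ = 2 ^ (2 : ℝ) * (τ / 2) ^ (2 : ℝ) := by
          rw [show (2 : ℝ≥0∞) ^ (2 : ℝ) = 2 * 2 by rw [ENNReal.rpow_two, sq]]
          ring
      _ = τ ^ (2 : ℝ) := by
          rw [← ENNReal.mul_rpow_of_nonneg _ _ (by norm_num),
            ENNReal.mul_div_cancel (by norm_num) (by norm_num)]
  calc _ ≤ τ ^ p * (Vg + Vh) := by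
        gcongr
        exact (measure_mono hsub).trans (measure_union_le _ _)
    _ = τ ^ p * Vg + τ ^ p * Vh := mul_add _ _ _
    _ ≤ _ := add_le_add hg2 hh2
    _ = _ := by ring

/-- **Vector-valued Hardy–Littlewood maximal inequality in weak Lebesgue spaces**
(Lemma 2.9): for every `1 < p < ∞` there is `C_p > 0` such that for every sequence
`(f_k)` of measurable functions on `ℝⁿ` with `(∑_k |f_k|²)^{1/2} ∈ L^{(p,∞)}`,
`‖(∑_k (M f_k)²)^{1/2}‖_{L^{(p,∞)}} ≤ C_p ‖(∑_k |f_k|²)^{1/2}‖_{L^{(p,∞)}}`. -/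
theorem vector_valued_maximal_weak_Lp
    (n : ℕ) (hn : 1 ≤ n) (p : ℝ) (hp : 1 < p) :
    ∃ C : ℝ, 0 < C ∧ ∀ f : ℕ → Rn n → ℂ, (∀ k, Measurable (f k)) →
      wquasi (fun x => (∑' k : ℕ, (‖f k x‖₊ : ℝ≥0∞) ^ 2) ^ (1 / 2 : ℝ)) p < ⊤ →
      wquasi (fun x => (∑' k : ℕ, (maximal (f k) x) ^ 2) ^ (1 / 2 : ℝ)) p ≤
        ENNReal.ofReal C *
          wquasi (fun x => (∑' k : ℕ, (‖f k x‖₊ : ℝ≥0∞) ^ 2) ^ (1 / 2 : ℝ)) p := by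
  have hp0 : 0 < p := by linarith
  obtain ⟨D, hD, hmain⟩ := vector_distribution_le n hp
  have hDp : D ^ (1 / p) ≠ ⊤ := ENNReal.rpow_ne_top_of_nonneg (by positivity) hD
  refine ⟨(D ^ (1 / p)).toReal + 1, by positivity, ?_⟩
  intro f hf hfin
  set N := wquasi (fun x => (∑' k : ℕ, (‖f k x‖₊ : ℝ≥0∞) ^ 2) ^ (1 / 2 : ℝ)) p with hN
  have htail : ∀ t : ℝ, 0 < t →
      volume {x | ENNReal.ofReal t < (∑' k, (‖f k x‖₊ : ℝ≥0∞) ^ (2 : ℝ)) ^ (1 / 2 : ℝ)} ≤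
        N ^ p * ENNReal.ofReal (t ^ (-p)) := by
    intro t ht
    have h := le_iSup (fun s : ℝ≥0 => (s : ℝ≥0∞) * (volume {x | (s : ℝ≥0∞) <
      (∑' k : ℕ, (‖f k x‖₊ : ℝ≥0∞) ^ 2) ^ (1 / 2 : ℝ)}) ^ (1 / p)) t.toNNReal
    have h' : ENNReal.ofReal t * (volume {x | ENNReal.ofReal t <
      (∑' k : ℕ, (‖f k x‖₊ : ℝ≥0∞) ^ 2) ^ (1 / 2 : ℝ)}) ^ (1 / p) ≤ N := h
    simp_rw [ENNReal.rpow_two]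
    have h2 := ENNReal.rpow_le_rpow h' hp0.le
    rw [ENNReal.mul_rpow_of_nonneg _ _ hp0.le, ← ENNReal.rpow_mul, one_div_mul_cancel hp0.ne',
      ENNReal.rpow_one] at h2
    have hτ0 : ENNReal.ofReal t ≠ 0 := by simpa using ht
    rw [← ENNReal.ofReal_rpow_of_pos ht, ENNReal.rpow_neg, ← div_eq_mul_inv,
      ENNReal.le_div_iff_mul_le, mul_comm]
    · exact h2
    · exact Or.inl (ENNReal.rpow_pos (pos_iff_ne_zero.2 hτ0) ENNReal.ofReal_ne_top).ne'
    · exact Or.inl (ENNReal.rpow_ne_top_of_nonneg hp0.le ENNReal.ofReal_ne_top)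
  have hres := hmain (fun k x => (‖f k x‖₊ : ℝ≥0∞)) (fun k => by have := hf k; fun_prop) (N ^ p)
    (ENNReal.rpow_ne_top_of_nonneg hp0.le hfin.ne) htail
  have hC : D ^ (1 / p) ≤ ENNReal.ofReal ((D ^ (1 / p)).toReal + 1) := by
    rw [ENNReal.le_ofReal_iff_toReal_le hDp (by positivity)]
    linarith
  refine iSup_le fun t => ?_
  rcases eq_or_ne t 0 with rfl | ht
  · simp
  have h := hres t (by positivity)
  rw [ENNReal.ofReal_coe_nnreal] at h
  have hset : {x | (t : ℝ≥0∞) < (∑' k : ℕ, (maximal (f k) x) ^ 2) ^ (1 / 2 : ℝ)} =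
      {x | (t : ℝ≥0∞) ^ (2 : ℝ) < ∑' k, HL (fun x => (‖f k x‖₊ : ℝ≥0∞)) x ^ (2 : ℝ)} := by
    ext x
    simp only [mem_ofPred_eq, maximal_eq_HL, ENNReal.rpow_two, one_div]
    rw [ENNReal.lt_rpow_inv_iff (by norm_num), ENNReal.rpow_two]
  rw [hset]
  have h2 := ENNReal.rpow_le_rpow h (show 0 ≤ 1 / p by positivity)
  rw [ENNReal.mul_rpow_of_nonneg _ _ (by positivity), ENNReal.mul_rpow_of_nonneg _ _ (by positivity),
    ← ENNReal.rpow_mul, ← ENNReal.rpow_mul, mul_one_div_cancel hp0.ne', ENNReal.rpow_one,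
    ENNReal.rpow_one] at h2
  exact h2.trans (by gcongr)
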